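/- Let G be a finite simple graph with vertex set V and nonnegative edge weights w, let W, W⋆ ⊆ V, and let R be a connected component of the subgraph of G induced on W Δ W⋆. Then the cut of the modified vertex set W Δ R satisfies the disjoint-union identity C(W Δ R) = (C(W) \ ∂R) ∪ (∂R ∩ C(W⋆)), where the two sets on the right are disjoint; consequently |C(W Δ R)| = |C(W)| − w(∂R ∩ C(W)) + w(∂R ∩ C(W⋆)). (This is the single-region replacement step used in the proof of the local–global compatibility theorem.) -/

import Mathlib

open scoped Classical symmDiff

/-- The cut of a vertex set `W`: the edges of `G` with exactly one endpoint in `W`. -/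
def graphCut {V : Type*} (G : SimpleGraph V) (W : Set V) : Set (Sym2 V) :=
  {e | e ∈ G.edgeSet ∧ ∃ a b, e = s(a, b) ∧ a ∈ W ∧ b ∉ W}

/-- The total weight of a set of edges. -/
noncomputable def edgeWeight {V : Type*} [Fintype V] [DecidableEq V]
    (w : Sym2 V → ℝ) (S : Set (Sym2 V)) : ℝ :=
  ∑ e : Sym2 V, S.indicator w e

/-- `R` is (the vertex set of) a connected component of the subgraph of `G`
induced on `D`. -/
def IsCompOf {V : Type*} (G : SimpleGraph V) (D R : Set V) : Prop :=
  ∃ c : (SimpleGraph.induce D G).ConnectedComponent, R = Subtype.val '' c.supp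

theorem mem_graphCut_mk {V : Type*} (G : SimpleGraph V) (W : Set V) (a b : V) :
    s(a, b) ∈ graphCut G W ↔ G.Adj a b ∧ ¬ (a ∈ W ↔ b ∈ W) := by
  unfold graphCut
  simp only [Set.mem_setOf_eq, SimpleGraph.mem_edgeSet]
  refine and_congr_right fun _ => ⟨?_, fun h => ?_⟩
  · rintro ⟨x, y, he, hx, hy⟩
    rcases Sym2.eq_iff.mp he with ⟨rfl, rfl⟩ | ⟨rfl, rfl⟩ <;> tauto
  · by_cases ha : a ∈ W
    · exact ⟨a, b, rfl, ha, by tauto⟩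
    · exact ⟨b, a, Sym2.eq_swap, by tauto, ha⟩

theorem isCompOf_subset {V : Type*} {G : SimpleGraph V} {D R : Set V}
    (h : IsCompOf G D R) : R ⊆ D := by
  obtain ⟨c, rfl⟩ := h
  rintro _ ⟨x, _, rfl⟩
  exact x.2

theorem isCompOf_closed {V : Type*} {G : SimpleGraph V} {D R : Set V}
    (h : IsCompOf G D R) {a b : V} (hab : G.Adj a b) (ha : a ∈ R) (hb : b ∈ D) : b ∈ R := by
  obtain ⟨c, rfl⟩ := h
  obtain ⟨x, hx, rfl⟩ := ha
  refine ⟨⟨b, hb⟩, ?_, rfl⟩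
  rw [SimpleGraph.ConnectedComponent.mem_supp_iff] at hx ⊢
  rw [← hx]
  refine SimpleGraph.ConnectedComponent.sound (SimpleGraph.Adj.reachable ?_)
  exact hab.symm

/-- **Single-region replacement.** For a connected component `R` of the induced
subgraph on `W ∆ W⋆`, the cut of `W ∆ R` is the disjoint union
`(C(W) \ ∂R) ∪ (∂R ∩ C(W⋆))`, and the cut weight changes by
`− w(∂R ∩ C(W)) + w(∂R ∩ C(W⋆))`. -/
theorem single_region_replacement {V : Type*} [Fintype V] [DecidableEq V]
    (G : SimpleGraph V) (w : Sym2 V → ℝ) (hw : ∀ e, 0 ≤ w e)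
    (W Wstar R : Set V) (hR : IsCompOf G (W ∆ Wstar) R) :
    graphCut G (W ∆ R) =
        (graphCut G W \ graphCut G R) ∪ (graphCut G R ∩ graphCut G Wstar) ∧
    Disjoint (graphCut G W \ graphCut G R) (graphCut G R ∩ graphCut G Wstar) ∧
    edgeWeight w (graphCut G (W ∆ R)) =
      edgeWeight w (graphCut G W)
        - edgeWeight w (graphCut G R ∩ graphCut G W)
        + edgeWeight w (graphCut G R ∩ graphCut G Wstar) := by
  have h1 : graphCut G (W ∆ R) =
      (graphCut G W \ graphCut G R) ∪ (graphCut G R ∩ graphCut G Wstar) := by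
    ext e
    induction e using Sym2.ind with
    | _ a b =>
      simp only [Set.mem_union, Set.mem_diff, Set.mem_inter_iff, mem_graphCut_mk,
        Set.mem_symmDiff]
      by_cases hab : G.Adj a b
      · have ha := @isCompOf_subset _ _ _ _ hR a
        have hb := @isCompOf_subset _ _ _ _ hR b
        have hc := isCompOf_closed hR hab
        have hd := isCompOf_closed hR hab.symm
        rw [Set.mem_symmDiff] at ha hb hc hd
        grind
      · simp [hab]
  have h2 : Disjoint (graphCut G W \ graphCut G R) (graphCut G R ∩ graphCut G Wstar) :=
    Set.disjoint_left.mpr fun e he hf => he.2 hf.1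
  refine ⟨h1, h2, ?_⟩
  rw [h1]
  unfold edgeWeight
  rw [← Finset.sum_sub_distrib, ← Finset.sum_add_distrib]
  refine Finset.sum_congr rfl fun e _ => ?_
  simp only [Set.indicator_apply, Set.mem_union, Set.mem_diff, Set.mem_inter_iff]
  by_cases x : e ∈ graphCut G W <;> by_cases y : e ∈ graphCut G R <;>
    by_cases z : e ∈ graphCut G Wstar <;> simp [x, y, z]
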